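/- Let m ≥ 0, n ≥ 1, k ≥ 0 be integers. Then, as an identity of polynomials in z, z^{k(k+1)/2} · T_{m,n}^{(−2n−k−1/2)}(z²/2) = b_{k,m,n} · Wr(He_1, He_3, …, He_{2(n+k)−1}, He_{2(m+1)}, He_{2(m+2)}, …, He_{2(m+n)})(z), where the Wronskian is taken of the n+k probabilists' Hermite polynomials of odd degrees 1, 3, …, 2(n+k)−1 followed by the n of even degrees 2(m+1), …, 2(m+n), and b_{k,m,n} = 2^{−n(m+1)} c_{m,n} / Δ(h), with c_{m,n} = (−1)^{n(2m+1+n)/2} ∏_{j=1}^{n} (j−1)!/(m+j)! and Δ(h) = ∏_{1≤i<j≤r}(h_j − h_i) the Vandermonde product of the list h = (1, 3, …, 2(n+k)−1, 2(m+1), 2(m+2), …, 2(m+n)) in that order. -/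

import Mathlib

noncomputable section

open Finset

/-- Generalized binomial coefficient `C(x, k)` for real `x`. -/
def genBinom (x : ℝ) (k : ℕ) : ℝ :=
  (∏ i ∈ Finset.range k, (x - i)) / (Nat.factorial k)

/-- Associated Laguerre polynomial `L_n^{(α)}(z)`, with the convention `L_n^{(α)} = 0` for `n < 0`. -/
def lagL (n : ℤ) (α : ℝ) : ℝ → ℝ := fun z =>
  if n < 0 then 0
  else ∑ k ∈ Finset.range (n.toNat + 1),
    (-1 : ℝ) ^ k * genBinom ((n : ℝ) + α) (n.toNat - k) * z ^ k / (Nat.factorial k)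

/-- Generalised Laguerre polynomial
`T_{m,n}^{(μ)}(z) = det[(d/dz)^{j+k} L_{m+n}^{(μ+1)}(z)]_{j,k=0}^{n-1}`
(with `T_{m,0}^{(μ)} = 1`, the empty determinant). -/
def genLag (m : ℤ) (n : ℕ) (μ : ℝ) : ℝ → ℝ := fun z =>
  Matrix.det (Matrix.of fun j k : Fin n =>
    iteratedDeriv ((j : ℕ) + (k : ℕ)) (lagL (m + n) (μ + 1)) z)

/-- Wronskian `Wr(f_1, …, f_r)(z) = det[(d/dz)^{j-1} f_k(z)]`. -/
def wronskian {r : ℕ} (f : Fin r → ℝ → ℝ) : ℝ → ℝ := fun z =>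
  Matrix.det (Matrix.of fun j k : Fin r => iteratedDeriv (j : ℕ) (f k) z)

/-- The constant `c_{m,n} = (-1)^{n(2m+1+n)/2} ∏_{j=1}^n (j-1)!/(m+j)!`. -/
def cmn (m n : ℕ) : ℝ :=
  (-1 : ℝ) ^ (n * (2 * m + 1 + n) / 2) *
    ∏ j ∈ Finset.range n, (Nat.factorial j : ℝ) / (Nat.factorial (m + j + 1))

/-- `τ_{m,n}^{(μ)}(z) = det[(z d/dz)^{j+k} L_{m+n}^{(n+μ)}(z)]_{j,k=0}^{n-1}`. -/
def tauP (m : ℤ) (n : ℕ) (μ : ℝ) : ℝ → ℝ := fun z =>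
  Matrix.det (Matrix.of fun j k : Fin n =>
    ((fun (g : ℝ → ℝ) => fun t => t * deriv g t)^[(j : ℕ) + (k : ℕ)]
      (lagL (m + n) ((n : ℝ) + μ))) z)

/-- Hirota bilinear operator `D_z(f • g) = f' g - f g'`. -/
def hirota (f g : ℝ → ℝ) (z : ℝ) : ℝ := deriv f z * g z - f z * deriv g z

/-- Probabilists' Hermite polynomial `He_n` as a real function. -/
def He (n : ℕ) : ℝ → ℝ := fun z => Polynomial.aeval z (Polynomial.hermite n)

/-- The fifth Painlevé equation (with `δ = -1/2`) for `w` with parameters `(a, b, c)`,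
holding at the point `z`. -/
def PV (a b c : ℝ) (w : ℝ → ℝ) (z : ℝ) : Prop :=
  iteratedDeriv 2 w z =
    (1 / (2 * w z) + 1 / (w z - 1)) * (deriv w z) ^ 2
      - (1 / z) * deriv w z
      + (w z - 1) ^ 2 * (a * (w z) ^ 2 + b) / (z ^ 2 * w z)
      + c * w z / z
      - w z * (w z + 1) / (2 * (w z - 1))

/-- The Jimbo–Miwa–Okamoto `σ`-equation `S_V` with parameters `(ν₁, ν₂, ν₃)`,
holding at the point `z`. -/
def SV (ν₁ ν₂ ν₃ : ℝ) (σ : ℝ → ℝ) (z : ℝ) : Prop :=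
  (z * iteratedDeriv 2 σ z) ^ 2 =
    (2 * (deriv σ z) ^ 2 + (ν₁ + ν₂ + ν₃ - z) * deriv σ z + σ z) ^ 2
      - 4 * deriv σ z * (deriv σ z + ν₁) * (deriv σ z + ν₂) * (deriv σ z + ν₃)

section Helpers
open Polynomial

/-- Iterated Euler-type operator `∏_{i<j} (X d/dX - a i)`. -/
def eulerOp (a : ℕ → ℝ) (f : ℝ[X]) : ℕ → ℝ[X]
  | 0 => f
  | j + 1 => X * derivative (eulerOp a f j) - C (a j) * eulerOp a f j

lemma eulerOp_coeff (a : ℕ → ℝ) (f : ℝ[X]) (j e : ℕ) :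
    (eulerOp a f j).coeff e = (∏ i ∈ range j, ((e : ℝ) - a i)) * f.coeff e := by
  induction j with
  | zero => simp [eulerOp]
  | succ j ih =>
    rw [eulerOp, prod_range_succ, coeff_sub, coeff_C_mul, ih]
    cases e with
    | zero => simp only [coeff_X_mul_zero]; rw [mul_assoc, mul_comm (_ - _)]; push_cast; ring
    | succ e =>
      rw [coeff_X_mul, coeff_derivative, ih]; push_cast; ring

lemma det_unitri {r : ℕ} (c : ℕ → ℕ → ℝ) (hc1 : ∀ j, c j j = 1) (hc0 : ∀ j i, j < i → c j i = 0)
    (f g : Fin r → Fin r → ℝ[X])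
    (h : ∀ j k, f j k = ∑ i : Fin r, C (c j i) * g i k) :
    Matrix.det (Matrix.of f) = Matrix.det (Matrix.of g) := by
  have : Matrix.of f = (Matrix.of fun j i : Fin r => C (c j i)) * Matrix.of g := by
    ext1 j k
    simp [Matrix.mul_apply, h]
  rw [this, Matrix.det_mul, Matrix.det_of_isLowerTriangular]
  · simp [hc1]
  · intro i j hij
    have : (i : ℕ) < j := by simpa using hij
    simp [hc0 _ _ this]

lemma eulerOp_expand (a : ℕ → ℝ) (j : ℕ) : ∃ c : ℕ → ℝ, c j = 1 ∧ (∀ i, j < i → c i = 0) ∧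
    ∀ f : ℝ[X], ∀ r, j < r →
      eulerOp a f j = ∑ i ∈ range r, C (c i) * (X ^ i * derivative^[i] f) := by
  induction j with
  | zero =>
    refine ⟨fun i => if i = 0 then 1 else 0, by simp, fun i hi => by simp; omega, ?_⟩
    intro f r hr
    rw [sum_eq_single 0]
    · simp [eulerOp]
    · intro b _ hb; simp [hb]
    · intro h; simp at h; omega
  | succ j ih =>
    obtain ⟨c, h1, h0, h⟩ := ih
    refine ⟨fun i => ((i : ℝ) - a j) * c i + (if i = 0 then 0 else c (i - 1)), ?_, ?_, ?_⟩
    · simp [h1, h0 (j+1) (by omega)]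
    · intro i hi
      have : i ≠ 0 := by omega
      simp [this, h0 i (by omega), h0 (i-1) (by omega)]
    · intro f r hr
      obtain ⟨r, rfl⟩ : ∃ s, r = s + 1 := ⟨r - 1, by omega⟩
      have key : ∀ i, X * derivative (C (c i) * (X ^ i * derivative^[i] f))
          - C (a j) * (C (c i) * (X ^ i * derivative^[i] f))
          = C (((i : ℝ) - a j) * c i) * (X ^ i * derivative^[i] f)
            + C (c i) * (X ^ (i+1) * derivative^[i+1] f) := by
        intro i
        rw [Function.iterate_succ_apply']
        simp only [derivative_mul, derivative_C, derivative_X_pow, C_mul, C_sub]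
        cases i with
        | zero => simp; ring
        | succ i => simp; ring
      have e1 : eulerOp a f (j+1) = ∑ i ∈ range (r+1), (C (((i : ℝ) - a j) * c i) * (X ^ i * derivative^[i] f)
            + C (c i) * (X ^ (i+1) * derivative^[i+1] f)) := by
        rw [eulerOp, h f (r+1) (by omega), derivative_sum, mul_sum, mul_sum, ← sum_sub_distrib]
        exact sum_congr rfl fun i _ => key i
      rw [e1, sum_add_distrib]
      simp only [C_add, add_mul]
      rw [sum_add_distrib]
      congr 1
      rw [sum_range_succ, sum_range_succ', h0 r (by omega)]
      simp

lemma det_eulerOp (a : ℕ → ℝ) {r : ℕ} (f : Fin r → ℝ[X]) :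
    Matrix.det (Matrix.of fun j k : Fin r => eulerOp a (f k) j)
      = (∏ i : Fin r, X ^ (i : ℕ)) *
        Matrix.det (Matrix.of fun j k : Fin r => derivative^[j] (f k)) := by
  choose c h1 h0 h using eulerOp_expand a
  rw [← Matrix.det_mul_column]
  refine det_unitri c h1 h0 _ _ ?_
  intro j k
  rw [h j (f k) r j.2, ← Fin.sum_univ_eq_sum_range (fun i => C (c j i) * (X ^ i * derivative^[i] (f k)))]
  rfl

lemma eulerOp_even (g : ℝ[X]) (j : ℕ) :
    eulerOp (fun i => 2 * (i : ℝ)) (g.comp (C (1/2) * X ^ 2)) j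
      = X ^ (2 * j) * (derivative^[j] g).comp (C (1/2) * X ^ 2) := by
  induction j with
  | zero => simp [eulerOp]
  | succ j ih =>
    rw [eulerOp, ih, Function.iterate_succ_apply']
    simp only [derivative_mul, derivative_comp, derivative_C, derivative_X_pow]
    have hC2 : (C (2 : ℝ)) = (2 : ℝ[X]) := rfl
    have : (C (1/2 : ℝ)) * 2 = (1 : ℝ[X]) := by
      rw [← hC2, ← C_mul]; norm_num
    have h2 : (C (2 * (j : ℝ)) : ℝ[X]) = 2 * (j : ℝ[X]) := by simp [hC2]
    rw [h2]
    clear ih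
    generalize (C (1/2 : ℝ) : ℝ[X]) = c at *
    generalize (derivative^[j] g).comp _ = A
    generalize (derivative (derivative^[j] g)).comp _ = B
    cases j with
    | zero => simp [hC2]; linear_combination X^2 * B * this
    | succ j =>
      simp [mul_add, hC2]
      linear_combination (X ^ (2*j+4) * B) * this

lemma eulerOp_add (a : ℕ → ℝ) (f : ℝ[X]) (M j : ℕ) :
    eulerOp a f (M + j) = eulerOp (fun i => a (M + i)) (eulerOp a f M) j := by
  induction j with
  | zero => rfl
  | succ j ih => rw [← add_assoc, eulerOp, ih, eulerOp]

lemma iteratedDeriv_eval (f : ℝ[X]) (j : ℕ) (z : ℝ) :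
    iteratedDeriv j (fun x => f.eval x) z = (derivative^[j] f).eval z := by
  induction j generalizing z with
  | zero => simp
  | succ j ih =>
    rw [iteratedDeriv_succ, funext ih, Polynomial.deriv, Function.iterate_succ_apply']

/-- Laguerre polynomial as a polynomial. -/
def lagP (p : ℕ) (α : ℝ) : ℝ[X] :=
  ∑ i ∈ range (p + 1), C ((-1) ^ i * genBinom (p + α) (p - i) / (Nat.factorial i)) * X ^ i

lemma lagL_eq (p : ℕ) (α : ℝ) : lagL (p : ℤ) α = fun z => (lagP p α).eval z := by
  ext z
  simp only [lagL, lagP, eval_finsetSum]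
  rw [if_neg (by omega)]
  simp only [Int.toNat_natCast, Int.cast_natCast]
  refine sum_congr rfl fun i _ => ?_
  simp; ring

lemma lagP_coeff (p : ℕ) (α : ℝ) (i : ℕ) :
    (lagP p α).coeff i =
      if i ≤ p then (-1) ^ i * genBinom (p + α) (p - i) / (Nat.factorial i) else 0 := by
  simp [lagP, coeff_X_pow]

lemma lagP_derivative (p : ℕ) (α : ℝ) : derivative (lagP (p+1) α) = - lagP p (α+1) := by
  ext i
  rw [coeff_derivative, coeff_neg, lagP_coeff, lagP_coeff]
  by_cases h : i ≤ p
  · rw [if_pos h, if_pos (by omega), Nat.factorial_succ, Nat.add_sub_add_right]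
    have e : ((p + 1 : ℕ) : ℝ) + α = p + (α + 1) := by push_cast; ring
    rw [e]
    have : (Nat.factorial i : ℝ) ≠ 0 := by positivity
    have h2 : (i : ℝ) + 1 ≠ 0 := by positivity
    push_cast
    field_simp
    ring
  · rw [if_neg h, if_neg (by omega)]; simp

lemma genBinom_pascal (x : ℝ) (d : ℕ) :
    genBinom x (d+1) = genBinom (x+1) (d+1) - genBinom x d := by
  have h1 : ∏ i ∈ range (d+1), (x + 1 - (i : ℝ)) = (x + 1) * ∏ i ∈ range d, (x - i) := by
    rw [prod_range_succ', mul_comm]; simp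
  unfold genBinom
  rw [h1, prod_range_succ, Nat.factorial_succ]
  have : (Nat.factorial d : ℝ) ≠ 0 := by positivity
  have h2 : (d : ℝ) + 1 ≠ 0 := by positivity
  push_cast
  field_simp
  ring

lemma lagP_contig (p : ℕ) (α : ℝ) :
    lagP (p+1) α = lagP (p+1) (α+1) - lagP p (α+1) := by
  ext i
  rw [coeff_sub, lagP_coeff, lagP_coeff, lagP_coeff]
  rcases lt_trichotomy i (p+1) with h | h | h
  · rw [if_pos h.le, if_pos h.le, if_pos (by omega)]
    obtain ⟨d, hd⟩ : ∃ d, p = i + d := ⟨p - i, by omega⟩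
    have e1 : p + 1 - i = d + 1 := by omega
    have e2 : p - i = d := by omega
    rw [e1, e2, genBinom_pascal]
    have e3 : ((p + 1 : ℕ) : ℝ) + α = p + (α + 1) := by push_cast; ring
    have e4 : ((p + 1 : ℕ) : ℝ) + (α + 1) = p + (α + 1) + 1 := by push_cast; ring
    rw [e3, e4]; ring
  · subst h; simp [genBinom]
  · rw [if_neg (by omega), if_neg (by omega), if_neg (by omega)]; simp

lemma lagP_expand (β : ℝ) (s : ℕ) : ∃ c : ℕ → ℝ, c s = 1 ∧ (∀ i, s < i → c i = 0) ∧
    ∀ b r, s < r → lagP (b + s) (β - s) = ∑ i ∈ range r, C (c i) * lagP (b + i) β := by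
  induction s with
  | zero =>
    refine ⟨fun i => if i = 0 then 1 else 0, by simp, fun i hi => by simp; omega, ?_⟩
    intro b r hr
    rw [sum_eq_single 0]
    · simp
    · intro b _ hb; simp [hb]
    · intro h; simp at h; omega
  | succ s ih =>
    obtain ⟨c, h1, h0, h⟩ := ih
    refine ⟨fun i => (if i = 0 then 0 else c (i - 1)) - c i, ?_, ?_, ?_⟩
    · simp [h1, h0 (s+1) (by omega)]
    · intro i hi
      have : i ≠ 0 := by omega
      simp [this, h0 i (by omega), h0 (i-1) (by omega)]
    · intro b r hr
      obtain ⟨r, rfl⟩ : ∃ s, r = s + 1 := ⟨r - 1, by omega⟩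
      have e : β - ((s + 1 : ℕ) : ℝ) + 1 = β - s := by push_cast; ring
      rw [← add_assoc, lagP_contig, e]
      rw [show b + s + 1 = (b + 1) + s by ring, h b (r+1) (by omega), h (b+1) r (by omega)]
      simp only [C_sub, sub_mul]
      rw [sum_sub_distrib]
      refine congrArg₂ _ ?_ rfl
      rw [sum_range_succ']
      rw [if_pos rfl, C_0, zero_mul, add_zero]
      refine sum_congr rfl fun i _ => ?_
      rw [if_neg (by omega), Nat.add_sub_cancel, show b + 1 + i = b + (i + 1) by ring]

lemma lagP_iter_derivative (p l : ℕ) (α : ℝ) :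
    derivative^[l] (lagP (p + l) α) = (-1) ^ l * lagP p (α + l) := by
  induction l generalizing α with
  | zero => simp
  | succ l ih =>
    rw [Function.iterate_succ_apply, ← add_assoc, lagP_derivative, iterate_derivative_neg, ih, pow_succ]
    have : α + 1 + l = α + ((l + 1 : ℕ) : ℝ) := by push_cast; ring
    rw [this]; ring

lemma sign_rev (n : ℕ) : ((Equiv.Perm.sign (Fin.revPerm : Equiv.Perm (Fin n)) : ℤˣ) : ℤ)
    = ∏ i : Fin n, (-1) ^ (i : ℕ) := by
  rw [Equiv.Perm.sign_eq_prod_prod_Iio, Units.coe_prod]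
  refine prod_congr rfl fun i _ => ?_
  rw [prod_congr rfl (g := fun _ => (-1 : ℤˣ)), prod_const, Fin.card_Iio]
  · simp
  · intro j hj
    rw [if_neg]
    simp at hj ⊢
    exact hj.le

lemma det_lag (m n : ℕ) (α : ℝ) :
    Matrix.det (Matrix.of fun j l : Fin n => derivative^[(j : ℕ) + l] (lagP (m + n) α))
      = Matrix.det (Matrix.of fun j l : Fin n => derivative^[j] (lagP (m + 1 + l) (α + (n - 1)))) := by
  set T := Matrix.of fun j l : Fin n => derivative^[(j : ℕ) + l] (lagP (m + n) α) with hT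
  have h1 := Matrix.det_permute' (Fin.revPerm : Equiv.Perm (Fin n)) T
  rw [sign_rev] at h1
  choose c c1 c0 hc using lagP_expand (α + (n - 1))
  have h2 : (T.submatrix id (Fin.revPerm : Equiv.Perm (Fin n))) =
      Matrix.of fun j l : Fin n => (-1) ^ (Fin.rev l : ℕ) *
        (Matrix.of fun j l : Fin n => derivative^[j] (lagP (m + 1 + l) (α + (n - 1) - l))) j l := by
    ext1 j l
    simp only [hT, Matrix.submatrix_apply, Matrix.of_apply, id, Fin.revPerm_apply, Function.iterate_add_apply]
    have e : m + n = (m + 1 + l) + (Fin.rev l : ℕ) := by rw [Fin.val_rev]; omega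
    have e2 : α + ((Fin.rev l : ℕ) : ℝ) = α + (n - 1) - l := by
      have : (Fin.rev l : ℕ) + l + 1 = n := by rw [Fin.val_rev]; omega
      have : ((Fin.rev l : ℕ) : ℝ) + l + 1 = n := by exact_mod_cast this
      linarith
    rw [e, lagP_iter_derivative, e2]
    rcases neg_one_pow_eq_or ℝ[X] (Fin.rev l : ℕ) with h | h <;> simp only [h, one_mul, neg_mul, iterate_derivative_neg]
  rw [h2, Matrix.det_mul_row] at h1
  have h3 : ∏ l : Fin n, (-1 : ℝ[X]) ^ (Fin.rev l : ℕ) = ∏ l : Fin n, (-1 : ℝ[X]) ^ (l : ℕ) :=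
    Equiv.prod_comp (Fin.revPerm : Equiv.Perm (Fin n)) (fun l => (-1 : ℝ[X]) ^ (l : ℕ))
  rw [h3] at h1
  push_cast at h1
  have h4 : ∏ l : Fin n, (-1 : ℝ[X]) ^ (l : ℕ) ≠ 0 := by
    rw [prod_ne_zero_iff]; intro i _; exact pow_ne_zero _ (by simp)
  rw [← mul_left_cancel₀ h4 h1]
  rw [← Matrix.det_transpose, ← Matrix.det_transpose (Matrix.of _)]
  refine det_unitri c c1 c0 (fun l j => derivative^[j] (lagP (m + 1 + l) (α + (n - 1) - l)))
    (fun l j => derivative^[j] (lagP (m + 1 + l) (α + (n - 1)))) ?_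
  intro l j
  rw [hc l (m+1) n l.2, iterate_derivative_sum]
  simp only [iterate_derivative_C_mul]
  rw [← Fin.sum_univ_eq_sum_range (fun i => C (c l i) * derivative^[j] (lagP (m + 1 + i) (α + (n - 1))))]

/-- Real Hermite polynomial. -/
def heP (n : ℕ) : ℝ[X] := (hermite n).map (Int.castRingHom ℝ)

lemma He_eq (n : ℕ) : He n = fun z => (heP n).eval z := by
  ext z
  simp [He, heP, aeval_def, eval_map]

/-- The product `∏_{l<M} (2i - (2l+1))`. -/
def qM (M i : ℕ) : ℝ := ∏ l ∈ range M, (2 * (i : ℝ) - (2 * l + 1))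

lemma qM_succ (M i : ℕ) : qM M i * (2 * i + 1) = qM M (i+1) * (2 * i + 1 - 2 * M) := by
  have h1 : ∏ l ∈ range (M+1), (2 * (i : ℝ) + 1 - 2 * l) = qM M (i+1) * (2 * i + 1 - 2 * M) := by
    rw [prod_range_succ, qM]
    congr 1
    refine prod_congr rfl fun l _ => ?_
    push_cast; ring
  rw [← h1, prod_range_succ', qM]
  congr 1
  · refine prod_congr rfl fun l _ => ?_
    push_cast; ring
  · simp

lemma herm_ratio (d i : ℕ) : ((hermite (2 * (i + (d + 1)))).coeff (2 * i) : ℝ) * (2 * d + 2)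
    = - ((hermite (2 * (i + (d + 1)))).coeff (2 * (i + 1)) : ℝ) * ((2 * i + 2) * (2 * i + 1)) := by
  have h1 := coeff_hermite_explicit (d+1) (2 * i)
  have h2 := coeff_hermite_explicit d (2 * (i+1))
  rw [show 2 * (d+1) + 2 * i = 2 * (i + (d + 1)) by ring] at h1
  rw [show 2 * d + 2 * (i+1) = 2 * (i + (d + 1)) by ring] at h2
  rw [h1, h2]
  have hf : Nat.doubleFactorial (2 * (d+1) - 1) = (2 * d + 1) * Nat.doubleFactorial (2 * d - 1) := by
    cases d with
    | zero => rfl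
    | succ d => exact Nat.doubleFactorial_add_two _
  rw [hf]
  have c1 := Nat.choose_succ_right_eq (2 * (i + (d + 1))) (2 * i)
  have c2 := Nat.choose_succ_right_eq (2 * (i + (d + 1))) (2 * i + 1)
  rw [show 2 * (i + (d + 1)) - 2 * i = 2 * d + 2 by omega] at c1
  rw [show 2 * (i + (d + 1)) - (2 * i + 1) = 2 * d + 1 by omega] at c2
  rw [show 2 * (i + 1) = 2 * i + 1 + 1 by ring]
  have c1' : ((Nat.choose (2 * (i + (d + 1))) (2 * i + 1) : ℕ) : ℝ) * (2 * i + 1) =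
     (Nat.choose (2 * (i + (d + 1))) (2 * i) : ℕ) * (2 * d + 2) := by exact_mod_cast c1
  have c2' : ((Nat.choose (2 * (i + (d + 1))) (2 * i + 1 + 1) : ℕ) : ℝ) * (2 * i + 1 + 1) =
     (Nat.choose (2 * (i + (d + 1))) (2 * i + 1) : ℕ) * (2 * d + 1) := by exact_mod_cast c2
  push_cast
  generalize (Nat.doubleFactorial (2 * d - 1) : ℝ) = F at *
  generalize ((Nat.choose (2 * (i + (d + 1))) (2 * i + 1 + 1) : ℕ) : ℝ) = A at *
  generalize ((Nat.choose (2 * (i + (d + 1))) (2 * i + 1) : ℕ) : ℝ) = B at *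
  generalize ((Nat.choose (2 * (i + (d + 1))) (2 * i) : ℕ) : ℝ) = D at *
  rw [pow_succ]
  linear_combination (-1 : ℝ) ^ d * F * (2 * d + 1) * c1' + (-1 : ℝ) ^ d * F * (2 * i + 1) * c2'

/-- The constant relating Hermite and Laguerre. -/
def kP (M p : ℕ) : ℝ := (-1) ^ p * (Nat.factorial p) * 2 ^ p * qM M p

lemma herm_lag_coeff (M p : ℕ) (d : ℕ) : ∀ i, i + d = p →
    qM M i * ((hermite (2 * p)).coeff (2 * i) : ℝ)
      = kP M p * (((-1) ^ i * genBinom (p + (-1/2 - M)) d / (Nat.factorial i)) * (1/2) ^ i) := by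
  induction d with
  | zero =>
    intro i hi
    obtain rfl : i = p := by omega
    rw [coeff_hermite_self, kP]
    have : (Nat.factorial i : ℝ) ≠ 0 := by positivity
    have h1 : ((-1 : ℝ) ^ i) * (-1) ^ i = 1 := by rw [← mul_pow]; simp
    simp only [genBinom]
    simp
    field_simp
    rw [pow_two, h1, mul_one]
  | succ d ih =>
    intro i hi
    have I := ih (i+1) (by omega)
    have R := herm_ratio d i
    have Q := qM_succ M i
    rw [hi] at R
    have hG : genBinom (p + (-1/2 - M)) (d+1) = genBinom (p + (-1/2 - M)) d * ((2 * i + 1 - 2 * M) / (2 * (d + 1))) := by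
      unfold genBinom
      rw [prod_range_succ, Nat.factorial_succ]
      have : (p : ℝ) = i + (d + 1) := by exact_mod_cast hi.symm
      rw [this]
      have : (Nat.factorial d : ℝ) ≠ 0 := by positivity
      have h2 : (d : ℝ) + 1 ≠ 0 := by positivity
      push_cast
      field_simp
      ring
    rw [hG]
    rw [Nat.factorial_succ] at I
    generalize genBinom (p + (-1/2 - M)) d = G at *
    generalize kP M p = K at *
    generalize ((hermite (2 * p)).coeff (2 * i) : ℝ) = H at *
    generalize ((hermite (2 * p)).coeff (2 * (i+1)) : ℝ) = H' at *
    have hf : (Nat.factorial i : ℝ) ≠ 0 := by positivity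
    have h2 : (d : ℝ) + 1 ≠ 0 := by positivity
    have h3 : (i : ℝ) + 1 ≠ 0 := by positivity
    have h4 : 2 * (i : ℝ) + 1 ≠ 0 := by positivity
    have hH : H = - H' * ((i + 1) * (2 * i + 1)) / (d + 1) := by
      field_simp
      linear_combination R / 2
    have hq : qM M i = qM M (i+1) * (2 * i + 1 - 2 * M) / (2 * i + 1) := by
      field_simp
      linear_combination Q
    have e : qM M i * H = - (qM M (i+1) * H') * (2 * i + 1 - 2 * M) * (i + 1) / (d + 1) := by
      rw [hH, hq]; field_simp
    rw [e, I]
    push_cast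
    rw [pow_succ, pow_succ]
    field_simp

lemma comp_half_coeff (g : ℝ[X]) (e : ℕ) :
    (g.comp (C (1/2) * X ^ 2)).coeff e = if 2 ∣ e then g.coeff (e / 2) * (1/2) ^ (e / 2) else 0 := by
  have : g.comp (C (1/2) * X ^ 2) = expand ℝ 2 (g.comp (C (1/2) * X)) := by
    rw [expand_eq_comp_X_pow, comp_assoc]; simp
  rw [this, coeff_expand (by norm_num), comp_C_mul_X_coeff]

lemma eulerOp_heP_even (a : ℕ → ℝ) (M p : ℕ) (ha : ∀ i < M, a i = 2 * i + 1) :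
    eulerOp a (heP (2 * p)) M = C (kP M p) * (lagP p (-1/2 - M)).comp (C (1/2) * X ^ 2) := by
  ext e
  rw [eulerOp_coeff, coeff_C_mul, comp_half_coeff, heP, coeff_map]
  split_ifs with h
  · obtain ⟨i, rfl⟩ := h
    rw [Nat.mul_div_cancel_left _ (by norm_num), lagP_coeff]
    split_ifs with hi
    · rw [← herm_lag_coeff M p (p - i) i (by omega)]
      congr 1
      refine prod_congr rfl fun l hl => ?_
      rw [ha l (by simpa using hl)]; push_cast; ring
    · rw [coeff_hermite_of_lt (by omega)]; simp
  · rw [coeff_hermite_of_odd_add]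
    · simp
    · rw [Nat.odd_add]
      constructor
      · intro h; rw [Nat.odd_iff] at h; omega
      · intro h; rw [even_iff_two_dvd] at h; contradiction

lemma eulerOp_heP_odd_zero (a : ℕ → ℝ) (i j : ℕ) (hij : i < j) (ha : ∀ l ≤ i, a l = 2 * l + 1) :
    eulerOp a (heP (2 * i + 1)) j = 0 := by
  ext e
  rw [eulerOp_coeff, heP, coeff_map]
  by_cases h : Even e
  · rw [coeff_hermite_of_odd_add]
    · simp
    · exact Odd.add_even ⟨i, rfl⟩ h
  · rw [Nat.not_even_iff_odd] at h
    obtain ⟨t, rfl⟩ := h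
    by_cases ht : t ≤ i
    · rw [prod_eq_zero (i := t) (by simp; omega)]
      · simp
      · rw [ha t ht]; push_cast; ring
    · rw [coeff_hermite_of_lt (by omega)]; simp

lemma eulerOp_heP_odd_diag (a : ℕ → ℝ) (i : ℕ) (ha : ∀ l < i, a l = 2 * l + 1) :
    eulerOp a (heP (2 * i + 1)) i = C (2 ^ i * (Nat.factorial i : ℝ)) * X ^ (2 * i + 1) := by
  ext e
  rw [eulerOp_coeff, heP, coeff_map, coeff_C_mul, coeff_X_pow]
  split_ifs with h
  · subst h
    rw [coeff_hermite_self]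
    have : ∏ l ∈ range i, (((2 * i + 1 : ℕ) : ℝ) - a l) = ∏ l ∈ range i, (2 * ((i - l : ℕ) : ℝ)) := by
      refine prod_congr rfl fun l hl => ?_
      have hl : l < i := by simpa using hl
      rw [ha l hl, Nat.cast_sub hl.le]; push_cast; ring
    rw [this, prod_mul_distrib, prod_const, card_range, ← Nat.cast_prod, ← Nat.descFactorial_eq_prod_range,
      Nat.descFactorial_self]
    simp
  · by_cases h : Even e
    · rw [coeff_hermite_of_odd_add]
      · simp
      · exact Odd.add_even ⟨i, rfl⟩ h
    · rw [Nat.not_even_iff_odd] at h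
      obtain ⟨t, rfl⟩ := h
      by_cases ht : t < i
      · rw [prod_eq_zero (i := t) (by simpa using ht)]
        · simp
        · rw [ha t ht]; push_cast; ring
      · rw [coeff_hermite_of_lt (by omega)]; simp

lemma det_blocks {R : Type*} [CommRing R] (M n : ℕ) (E : ℕ → ℕ → R)
    (h0 : ∀ j i, i < M → i < j → E j i = 0) :
    Matrix.det (Matrix.of fun j l : Fin (M + n) => E j l)
      = (∏ i ∈ range M, E i i) *
        Matrix.det (Matrix.of fun j l : Fin n => E (M + j) (M + l)) := by
  rw [← Matrix.det_submatrix_equiv_self finSumFinEquiv]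
  have : (Matrix.of fun j l : Fin (M + n) => E j l).submatrix finSumFinEquiv finSumFinEquiv
      = Matrix.fromBlocks (Matrix.of fun j l : Fin M => E j l)
        (Matrix.of fun (j : Fin M) (l : Fin n) => E j (M + l)) 0
        (Matrix.of fun j l : Fin n => E (M + j) (M + l)) := by
    ext (j | j) (l | l)
    · simp
    · simp
    · simp [h0 (M + j) l l.2 (by omega)]
    · simp
  rw [this, Matrix.det_fromBlocks_zero₂₁, Matrix.det_of_isUpperTriangular]
  · rw [← Fin.prod_univ_eq_prod_range (fun i => E i i)]
    rfl
  · intro i j hij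
    exact h0 i j j.2 (by simpa using hij)

lemma prod_X_pow_exponents (n k : ℕ) :
    (∏ i : Fin (n + k + n), (X : ℝ[X]) ^ (i : ℕ)) * X ^ (k * (k + 1) / 2)
      = (∏ i ∈ range (n + k), X ^ (2 * i + 1)) * ∏ j ∈ range n, X ^ (2 * j) := by
  rw [Fin.prod_univ_eq_prod_range (fun i => (X : ℝ[X]) ^ i), prod_pow_eq_pow_sum, prod_pow_eq_pow_sum,
    prod_pow_eq_pow_sum, ← pow_add, ← pow_add]
  congr 1
  have h1 : ∀ t : ℕ, (((∑ i ∈ range t, i : ℕ) : ℤ) * 2 : ℤ) = t * (t - 1) := by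
    intro t; induction t with
    | zero => simp
    | succ t ih => rw [sum_range_succ, Nat.cast_add, add_mul, ih]; push_cast; ring
  have h2 : k * (k + 1) / 2 * 2 = k * (k + 1) := Nat.div_mul_cancel (Nat.even_mul_succ_self k).two_dvd
  have h3 := h1 (n + k + n)
  have h4 := h1 (n + k)
  have h5 := h1 n
  rw [sum_add_distrib, ← mul_sum, ← mul_sum, sum_const, card_range, smul_eq_mul]
  clear h1
  zify at *
  push_cast at *
  generalize ∑ i ∈ range (n + k + n), (i : ℤ) = A at *
  generalize ∑ i ∈ range (n + k), (i : ℤ) = B at *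
  generalize ∑ i ∈ range n, (i : ℤ) = D at *
  generalize (k : ℤ) * (k + 1) / 2 = F at *
  have : (2 : ℤ) * (A + F) = 2 * (2 * B + (n + k) * 1 + 2 * D) := by
    linear_combination h3 + h2 - 2 * h4 - 2 * h5
  linarith

lemma vander_eq (m n M : ℕ) (hd : ℕ → ℕ)
    (hhd : hd = fun i => if i < M then 2 * i + 1 else 2 * (m + 1 + (i - M))) :
    ∏ p ∈ Finset.univ.filter (fun p : Fin (M + n) × Fin (M + n) => p.1 < p.2),
        ((hd (p.2 : ℕ) : ℝ) - (hd (p.1 : ℕ) : ℝ))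
      = (∏ i ∈ range M, (2 ^ i * (Nat.factorial i : ℝ))) *
        ∏ l ∈ range n, (qM M (m + 1 + l) * (2 ^ l * (Nat.factorial l : ℝ))) := by
  have hfac : ∀ j : ℕ, ∏ i ∈ range j, (2 * (j : ℝ) - 2 * i) = 2 ^ j * (Nat.factorial j : ℝ) := by
    intro j
    have : ∏ i ∈ range j, (2 * (j : ℝ) - 2 * i) = ∏ l ∈ range j, (2 * ((j - l : ℕ) : ℝ)) := by
      refine prod_congr rfl fun l hl => ?_
      have hl : l < j := by simpa using hl
      rw [Nat.cast_sub hl.le]; push_cast; ring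
    rw [this, prod_mul_distrib, prod_const, card_range, ← Nat.cast_prod,
      ← Nat.descFactorial_eq_prod_range, Nat.descFactorial_self]
  have h1 : ∏ p ∈ Finset.univ.filter (fun p : Fin (M + n) × Fin (M + n) => p.1 < p.2),
        ((hd (p.2 : ℕ) : ℝ) - (hd (p.1 : ℕ) : ℝ))
      = ∏ j ∈ range (M + n), ∏ i ∈ range j, ((hd j : ℝ) - hd i) := by
    rw [← Fin.prod_univ_eq_prod_range (fun j => ∏ i ∈ range j, ((hd j : ℝ) - hd i)),
      prod_filter, Fintype.prod_prod_type_right]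
    refine prod_congr rfl fun j _ => ?_
    rw [← prod_filter]
    refine prod_bij (fun i _ => (i : ℕ)) ?_ ?_ ?_ ?_
    · intro i hi; simpa using hi
    · intro i _ i' _ h; exact Fin.ext h
    · intro b hb
      have hb : b < j := by simpa using hb
      exact ⟨⟨b, by omega⟩, by simp only [mem_filter, mem_univ, true_and]; exact hb, rfl⟩
    · intro i _; rfl
  rw [h1, prod_range_add]
  congr 1
  · refine prod_congr rfl fun j hj => ?_
    have hj : j < M := by simpa using hj
    rw [← hfac]
    refine prod_congr rfl fun i hi => ?_
    have hi : i < j := by simpa using hi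
    simp only [hhd, if_pos hj, if_pos (hi.trans hj)]
    push_cast; ring
  · refine prod_congr rfl fun l _ => ?_
    rw [prod_range_add, ← hfac, qM]
    congr 1
    · refine prod_congr rfl fun i hi => ?_
      have hi : i < M := by simpa using hi
      simp [hhd, hi]
    · refine prod_congr rfl fun i _ => ?_
      simp [hhd]; ring

lemma scalar_eq (m n M : ℕ) :
    ((2 : ℝ) ^ (n * (m + 1)))⁻¹ * cmn m n /
      ((∏ i ∈ range M, (2 ^ i * (Nat.factorial i : ℝ))) *
        ∏ l ∈ range n, (qM M (m + 1 + l) * (2 ^ l * (Nat.factorial l : ℝ))))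
      * ((∏ i ∈ range M, (2 ^ i * (Nat.factorial i : ℝ))) * ∏ l ∈ range n, kP M (m + 1 + l)) = 1 := by
  have hq : ∀ i, qM M i ≠ 0 := by
    intro i
    rw [qM, prod_ne_zero_iff]
    intro l _ h
    have : (2 * (i : ℤ) - (2 * l + 1)) = 0 := by exact_mod_cast h
    omega
  have hsign : (-1 : ℝ) ^ (n * (2 * m + 1 + n) / 2) = ∏ l ∈ range n, (-1 : ℝ) ^ (m + 1 + l) := by
    rw [prod_pow_eq_pow_sum]
    congr 1
    have : n * (2 * m + 1 + n) = (∑ l ∈ range n, (m + 1 + l)) * 2 := by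
      clear hq
      induction n with
      | zero => simp
      | succ n ih => rw [sum_range_succ, add_mul (∑ l ∈ range n, (m + 1 + l)), ← ih]; ring
    rw [this, Nat.mul_div_cancel _ (by norm_num)]
  have hA : ∏ i ∈ range M, (2 ^ i * (Nat.factorial i : ℝ)) ≠ 0 := by
    rw [prod_ne_zero_iff]; intro i _; positivity
  have hB : ∏ l ∈ range n, (qM M (m + 1 + l) * (2 ^ l * (Nat.factorial l : ℝ))) ≠ 0 := by
    rw [prod_ne_zero_iff]; intro i _
    exact mul_ne_zero (hq _) (by positivity)
  have main : cmn m n * ∏ l ∈ range n, kP M (m + 1 + l)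
      = 2 ^ (n * (m + 1)) * ∏ l ∈ range n, (qM M (m + 1 + l) * (2 ^ l * (Nat.factorial l : ℝ))) := by
    rw [cmn, hsign, ← prod_mul_distrib, ← prod_mul_distrib]
    have : (2 : ℝ) ^ (n * (m + 1)) = ∏ l ∈ range n, (2 : ℝ) ^ (m + 1) := by
      rw [prod_const, card_range, ← pow_mul, mul_comm]
    rw [this, ← prod_mul_distrib]
    refine prod_congr rfl fun l _ => ?_
    rw [kP, show m + l + 1 = m + 1 + l by ring]
    have hf : (Nat.factorial (m + 1 + l) : ℝ) ≠ 0 := by positivity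
    have h1 : ((-1 : ℝ) ^ (m + 1 + l)) * (-1) ^ (m + 1 + l) = 1 := by rw [← mul_pow]; simp
    generalize (-1 : ℝ) ^ (m + 1 + l) = s at *
    field_simp
    rw [pow_two, h1]
    rw [pow_add]; ring
  generalize ∏ i ∈ range M, (2 ^ i * (Nat.factorial i : ℝ)) = A at *
  generalize ∏ l ∈ range n, (qM M (m + 1 + l) * (2 ^ l * (Nat.factorial l : ℝ))) = B at *
  generalize ∏ l ∈ range n, kP M (m + 1 + l) = K at *
  field_simp
  rw [main]

lemma main_poly (m n k M : ℕ) (hM : M = n + k) (hd : ℕ → ℕ)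
    (hhd : hd = fun i => if i < M then 2 * i + 1 else 2 * (m + 1 + (i - M))) (b : ℝ)
    (hb : b * ((∏ i ∈ range M, (2 ^ i * (Nat.factorial i : ℝ))) *
      ∏ l ∈ range n, kP M (m + 1 + l)) = 1) :
    X ^ (k * (k + 1) / 2) * (Matrix.det (Matrix.of fun j l : Fin n => derivative^[j]
        (lagP (m + 1 + l) (-1/2 - (M : ℝ))))).comp (C (1/2) * X ^ 2)
      = C b * Matrix.det (Matrix.of fun j i : Fin (M + n) => derivative^[j] (heP (hd i))) := by
  have hX := prod_X_pow_exponents n k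
  rw [← hM] at hX
  let a : ℕ → ℝ := fun j => if j < M then 2 * j + 1 else 2 * ((j - M : ℕ) : ℝ)
  have ha : ∀ i < M, a i = 2 * i + 1 := fun i hi => by simp [a, hi]
  have ha2 : (fun i : ℕ => a (M + i)) = fun i : ℕ => 2 * (i : ℝ) := by
    ext i; simp [a]
  have hodd : ∀ i < M, hd i = 2 * i + 1 := fun i hi => by simp [hhd, hi]
  have heven : ∀ l, hd (M + l) = 2 * (m + 1 + l) := fun l => by simp [hhd]
  have E1 := det_eulerOp a (fun i : Fin (M + n) => heP (hd i))
  have E2 := det_blocks M n (fun j i => eulerOp a (heP (hd i)) j) (by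
    intro j i hi hij
    simp only [hodd i hi]
    exact eulerOp_heP_odd_zero a i j hij fun l hl => ha l (by omega))
  have E3 : ∏ i ∈ range M, eulerOp a (heP (hd i)) i
      = C (∏ i ∈ range M, (2 ^ i * (Nat.factorial i : ℝ))) * ∏ i ∈ range M, X ^ (2 * i + 1) := by
    rw [map_prod, ← prod_mul_distrib]
    refine prod_congr rfl fun i hi => ?_
    have hi : i < M := by simpa using hi
    rw [hodd i hi, eulerOp_heP_odd_diag a i fun l hl => ha l (by omega)]
  have E4 : Matrix.det (Matrix.of fun j l : Fin n => eulerOp a (heP (hd (M + l))) (M + j))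
      = C (∏ l ∈ range n, kP M (m + 1 + l)) * ((∏ j ∈ range n, X ^ (2 * j)) *
        (Matrix.det (Matrix.of fun j l : Fin n => derivative^[j]
        (lagP (m + 1 + l) (-1/2 - (M : ℝ))))).comp (C (1/2) * X ^ 2)) := by
    have hc : (Matrix.det (Matrix.of fun j l : Fin n => derivative^[j]
        (lagP (m + 1 + l) (-1/2 - (M : ℝ))))).comp (C (1/2) * X ^ 2)
        = Matrix.det (Matrix.of fun j l : Fin n => (derivative^[j]
        (lagP (m + 1 + l) (-1/2 - (M : ℝ)))).comp (C (1/2) * X ^ 2)) := by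
      have := RingHom.map_det (compRingHom (C (1/2 : ℝ) * X ^ 2)) (Matrix.of fun j l : Fin n => derivative^[j]
        (lagP (m + 1 + l) (-1/2 - (M : ℝ))))
      simp only [coe_compRingHom_apply] at this
      rw [this]
      congr 1
    rw [hc, map_prod, ← Fin.prod_univ_eq_prod_range (fun j => (X : ℝ[X]) ^ (2 * j)),
      ← Fin.prod_univ_eq_prod_range (fun l => C (kP M (m + 1 + l))), ← Matrix.det_mul_column,
      ← Matrix.det_mul_row]
    congr 1
    ext1 j l
    simp only [Matrix.of_apply]
    rw [heven, eulerOp_add, ha2, eulerOp_heP_even a M _ ha]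
    have : ∀ (c : ℝ) (g : ℝ[X]), C c * g.comp (C (1/2) * X ^ 2) = (C c * g).comp (C (1/2) * X ^ 2) := by
      intro c g; simp
    rw [this, eulerOp_even, iterate_derivative_C_mul, ← this]
    ring
  rw [E3, E4] at E2
  rw [E2] at E1
  have h4 : ∏ i : Fin (M + n), (X : ℝ[X]) ^ (i : ℕ) ≠ 0 := by
    rw [prod_ne_zero_iff]; intro i _; exact pow_ne_zero _ X_ne_zero
  refine mul_left_cancel₀ h4 ?_
  have hb' : C b * (C (∏ i ∈ range M, (2 ^ i * (Nat.factorial i : ℝ))) *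
      C (∏ l ∈ range n, kP M (m + 1 + l))) = (1 : ℝ[X]) := by
    rw [← C_mul, ← C_mul, hb, C_1]
  rw [← mul_assoc, hX, mul_left_comm, ← E1]
  linear_combination (- ((∏ i ∈ range M, X ^ (2 * i + 1)) * ∏ j ∈ range n, X ^ (2 * j)) * (Matrix.det (Matrix.of fun j l : Fin n => derivative^[j]
        (lagP (m + 1 + l) (-1/2 - (M : ℝ))))).comp (C (1/2) * X ^ 2)) * hb'

lemma eval_det_of {r : ℕ} (f : Fin r → Fin r → ℝ[X]) (z : ℝ) :
    (Matrix.det (Matrix.of f)).eval z = Matrix.det (Matrix.of fun i j => (f i j).eval z) := by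
  have := RingHom.map_det (evalRingHom z) (Matrix.of f)
  rw [coe_evalRingHom] at this
  rw [this]
  rfl
end Helpers

/-- `T_{m,n}^{(-2n-k-1/2)}(z²/2)` as a Wronskian of Hermite polynomials. -/
theorem genLag_half_integer_hermite (m n k : ℕ) (hn : 1 ≤ n) (hd : ℕ → ℕ)
    (hhd : hd = fun i => if i < n + k then 2 * i + 1 else 2 * (m + 1 + (i - (n + k)))) :
    ∀ z : ℝ,
      z ^ (k * (k + 1) / 2) *
          genLag (m : ℤ) n (-2 * (n : ℝ) - k - 1 / 2) (z ^ 2 / 2)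
        = (((2 : ℝ) ^ (n * (m + 1)))⁻¹ * cmn m n /
              ∏ p ∈ Finset.univ.filter
                  (fun p : Fin (n + k + n) × Fin (n + k + n) => p.1 < p.2),
                ((hd (p.2 : ℕ) : ℝ) - (hd (p.1 : ℕ) : ℝ))) *
            wronskian (fun i : Fin (n + k + n) => He (hd (i : ℕ))) z := by
  intro z
  have hb := scalar_eq m n (n + k)
  rw [← vander_eq m n (n + k) hd hhd] at hb
  have hmain := congrArg (Polynomial.eval z) (main_poly m n k (n + k) rfl hd hhd _ hb)
  have hβ : (-1/2 - ((n + k : ℕ) : ℝ)) = (-2 * (n : ℝ) - k - 1 / 2 + 1) + (n - 1) := by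
    push_cast; ring
  rw [hβ, ← det_lag] at hmain
  simp only [Polynomial.eval_mul, Polynomial.eval_comp, Polynomial.eval_pow, Polynomial.eval_X,
    Polynomial.eval_C, eval_det_of] at hmain
  have hz : 1 / 2 * z ^ 2 = z ^ 2 / 2 := by ring
  rw [hz] at hmain
  unfold genLag wronskian
  have hmn : (m : ℤ) + (n : ℤ) = ((m + n : ℕ) : ℤ) := by push_cast; rfl
  simp only [hmn, lagL_eq, He_eq, iteratedDeriv_eval]
  exact hmain
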